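/- arXiv:1012.1797 — 2 statements merged into one kernel-verified Lean document; each statement's English description precedes it below -/
import Mathlib

section
/- Fix 0 < ε < 1 and 2 ≤ σ ≤ k. Then z_{λ^σ} = [z_{λ^σ}[1] ∧ ⋯ ∧ z_{λ^σ}[k]], where z_{λ^σ}[i] ∈ Sym^{≤k}ℂ^k is the sum, over all ordered tuples (i_1,…,i_s) of positive integers with i_1+⋯+i_s = i and ⌊i_1/σ⌋+⋯+⌊i_s/σ⌋ = ⌊i/σ⌋, of e_{i_1}⋯e_{i_s}; and z_{μ^σ} = [z_{μ^σ}[1] ∧ ⋯ ∧ z_{μ^σ}[k]], where z_{μ^σ}[i] is the sum, over all ordered tuples (i_1,…,i_s) of positive integers with i_1+⋯+i_s = i and no i_j equal to σ, of e_{i_1}⋯e_{i_s}. -/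
open scoped BigOperators

namespace JetPaper

/-- Monomials in `n` variables of degree between `1` and `k`:
these index the standard basis of `Sym^{≤k}ℂ^n = ⊕_{l=1}^k Sym^l ℂ^n`. -/
def Mon (n k : ℕ) : Type := {m : Fin n → ℕ // 0 < ∑ i, m i ∧ ∑ i, m i ≤ k}

noncomputable instance (n k : ℕ) : Fintype (Mon n k) :=
  Fintype.ofInjective
    (fun m : Mon n k => (fun i => (⟨m.1 i, Nat.lt_succ_of_le
        ((Finset.single_le_sum (fun _ _ => Nat.zero_le _) (Finset.mem_univ i)).trans
          m.2.2)⟩ : Fin (k + 1))))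
    (fun _ _ h => Subtype.ext (funext fun i => congrArg Fin.val (congrFun h i)))

/-- The matrix coefficient of the `GL(n)`-action on `Sym^{≤k}ℂ^n` induced by the standard
action on `ℂ^n` (`g·e_i = ∑_j g_{ji} e_j`), in the monomial basis:
`symMat g m m'` is the coefficient of the monomial `m` in the image of the monomial `m'`. -/
noncomputable def symMat {n k : ℕ} (g : Matrix (Fin n) (Fin n) ℂ) (m m' : Mon n k) : ℂ :=
  MvPolynomial.coeff (Finsupp.equivFunOnFinite.symm m.1)
    (∏ i : Fin n, (∑ j : Fin n, g j i • MvPolynomial.X j) ^ (m'.1 i))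

/-- The induced action of `g ∈ GL(n)` on `(Sym^{≤k}ℂ^n)^{⊗k}`, in coordinates.
Elements of the `k`-th tensor power of `Sym^{≤k}ℂ^n` are recorded by their coordinates
in the basis indexed by `k`-tuples of monomials; `⋀^k(Sym^{≤k}ℂ^n)` is realised inside the
tensor power as the space of antisymmetric tensors. -/
noncomputable def actV {n k : ℕ} (g : Matrix (Fin n) (Fin n) ℂ)
    (T : (Fin k → Mon n k) → ℂ) : (Fin k → Mon n k) → ℂ :=
  fun mf => ∑ mf' : Fin k → Mon n k, (∏ i, symMat g (mf i) (mf' i)) * T mf'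

/-- The wedge product `v₁ ∧ ⋯ ∧ v_k` of `k` elements of `Sym^{≤k}ℂ^n`, realised as an
antisymmetric tensor in `(Sym^{≤k}ℂ^n)^{⊗k}` (in coordinates). -/
noncomputable def wedge {n k : ℕ} (v : Fin k → (Mon n k → ℂ)) : (Fin k → Mon n k) → ℂ :=
  fun mf => ∑ σ : Equiv.Perm (Fin k), ((Equiv.Perm.sign σ : ℤ) : ℂ) * ∏ i, v (σ i) (mf i)

/-- The `j`-th coordinate polynomial of `φ(γ) ∈ Hom(ℂ^k, Sym^{≤k}ℂ^n)` for
`γ ∈ Hom(ℂ^k, ℂ^n)`: the sum over all `s ≥ 1` and all ordered `s`-tuples `(i₁,…,i_s)` of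
positive integers with `i₁+⋯+i_s = j` of the product (in the symmetric algebra,
realised as the polynomial ring in `n` variables) of the `i₁`-th, …, `i_s`-th columns
of `γ`.  A tuple of length `s = l+1` is recorded as a function `a : Fin (l+1) → Fin k`,
the value `a t` standing for the positive integer `(a t) + 1`. -/
noncomputable def colPoly {n k : ℕ} (γ : Matrix (Fin n) (Fin k) ℂ) (j : Fin k) :
    MvPolynomial (Fin n) ℂ :=
  ∑ l : Fin k, ∑ a : Fin (l.val + 1) → Fin k,
    if (∑ t, ((a t).val + 1)) = j.val + 1 then
      ∏ t, (∑ i : Fin n, γ i (a t) • MvPolynomial.X i)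
    else 0

/-- The map `φ : Hom(ℂ^k,ℂ^n) → Hom(ℂ^k, Sym^{≤k}ℂ^n)` as a matrix in the monomial basis:
rows are indexed by monomials, columns by `Fin k`. -/
noncomputable def phiMat {n k : ℕ} (γ : Matrix (Fin n) (Fin k) ℂ) :
    Matrix (Mon n k) (Fin k) ℂ :=
  fun m j => MvPolynomial.coeff (Finsupp.equivFunOnFinite.symm m.1) (colPoly γ j)

/-- `φ^{Proj}` at the level of vectors: the wedge `φ(γ)e₁ ∧ ⋯ ∧ φ(γ)e_k` of the columns of
`φ(γ)`, an element of `⋀^k(Sym^{≤k}ℂ^n)` in coordinates. -/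
noncomputable def wedgePhi {n k : ℕ} (γ : Matrix (Fin n) (Fin k) ℂ) :
    (Fin k → Mon n k) → ℂ :=
  wedge (fun j m => phiMat γ m j)

/-- The matrix of the reparametrization jet with parameters `α = (α₁,…,α_k)`
(`α_s` is recorded as `α ⟨s-1⟩`): the `(i,j)` entry is
`∑_{s₁+⋯+s_i = j, s_l ≥ 1} α_{s₁}⋯α_{s_i}` (rows and columns of `Fin k` represent
the integers `1,…,k`). -/
noncomputable def repMat (k : ℕ) (α : Fin k → ℂ) : Matrix (Fin k) (Fin k) ℂ :=
  fun i j => ∑ a : Fin (i.val + 1) → Fin k,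
    if (∑ t, ((a t).val + 1)) = j.val + 1 then ∏ t, α (a t) else 0

/-- The reparametrization group `𝔾_k ⊂ GL(k,ℂ)`. -/
def Gset (k : ℕ) : Set (Matrix (Fin k) (Fin k) ℂ) :=
  {g | ∃ α : Fin k → ℂ, (∀ i : Fin k, i.val = 0 → α i ≠ 0) ∧ g = repMat k α}

/-- The unipotent radical `𝕌_k ⊂ 𝔾_k`: the matrices `repMat k α` with `α₁ = 1`. -/
def Uset (k : ℕ) : Set (Matrix (Fin k) (Fin k) ℂ) :=
  {g | ∃ α : Fin k → ℂ, (∀ i : Fin k, i.val = 0 → α i = 1) ∧ g = repMat k α}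

/-- The distinguished point
`p_k = e₁ ∧ (e₂ + e₁²) ∧ ⋯ ∧ (∑_{i₁+⋯+i_s = k} e_{i₁}⋯e_{i_s}) ∈ ⋀^k(Sym^{≤k}ℂ^k)`,
i.e. the wedge of the columns of `φ(1)`. -/
noncomputable def pkVec (k : ℕ) : (Fin k → Mon k k) → ℂ :=
  wedgePhi (1 : Matrix (Fin k) (Fin k) ℂ)


/-- Coordinates on `⋀^k(Sym^{≤k}ℂ^k)`, realised inside `(Sym^{≤k}ℂ^k)^{⊗k}`. -/
abbrev Vk (k : ℕ) : Type := (Fin k → Mon k k) → ℂ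

/-- The diagonal transformation `ν(t) : e_i ↦ t^{ν_i} e_i` (for a tuple of reals
`ν = (ν₁,…,ν_k)` and `t > 0`) acting on `⋀^k(Sym^{≤k}ℂ^k)`: a monomial `m` is scaled
by `t^{∑_j ν_j m_j}`. -/
noncomputable def nuAct {k : ℕ} (ν : Fin k → ℝ) (t : ℝ) (T : Vk k) : Vk k :=
  fun mf => ((∏ i, t ^ (∑ j : Fin k, ν j * ((mf i).1 j : ℝ)) : ℝ) : ℂ) * T mf

/-- The weights `λ^σ_i = i − ⌊i/σ⌋ε` (`1`-based index `i`). -/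
noncomputable def lamW (ε : ℝ) (σ i : ℕ) : ℝ := (i : ℝ) - ((i / σ : ℕ) : ℝ) * ε

/-- The one-parameter family `λ^σ`, as a tuple of weights on `Fin k`
(the index `i : Fin k` represents the integer `i+1`). -/
noncomputable def lamS (k : ℕ) (ε : ℝ) (σ : ℕ) : Fin k → ℝ :=
  fun i => lamW ε σ ((i : ℕ) + 1)

/-- The one-parameter family `μ^σ`: `μ^σ_i = i` for `i ≠ σ` and `μ^σ_σ = σ + ε`. -/
noncomputable def muS (k : ℕ) (ε : ℝ) (σ : ℕ) : Fin k → ℝ :=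
  fun i => if (i : ℕ) + 1 = σ then (σ : ℝ) + ε else ((i : ℕ) + 1 : ℝ)

/-- `z_{λ^σ}[i] ∈ Sym^{≤k}ℂ^k`: the sum, over all ordered tuples `(i₁,…,i_s)` of positive
integers with `i₁+⋯+i_s = i` and `⌊i₁/σ⌋+⋯+⌊i_s/σ⌋ = ⌊i/σ⌋`, of `e_{i₁}⋯e_{i_s}`.
In coordinates: the coefficient of a monomial `m` is the number of such ordered tuples
whose product is `m`, i.e. the multinomial coefficient of `m`, when `m` has weight `i`
and defect `⌊i/σ⌋`, and `0` otherwise. -/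
noncomputable def zLamPart (k σ i : ℕ) : Mon k k → ℂ :=
  fun m =>
    if (∑ j : Fin k, ((j : ℕ) + 1) * m.1 j) = i ∧
        (∑ j : Fin k, (((j : ℕ) + 1) / σ) * m.1 j) = i / σ then
      (Nat.multinomial Finset.univ m.1 : ℂ)
    else 0

/-- `z_{μ^σ}[i] ∈ Sym^{≤k}ℂ^k`: the sum, over all ordered tuples `(i₁,…,i_s)` of positive
integers with `i₁+⋯+i_s = i` and no entry equal to `σ`, of `e_{i₁}⋯e_{i_s}`. -/
noncomputable def zMuPart (k σ i : ℕ) : Mon k k → ℂ :=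
  fun m =>
    if (∑ j : Fin k, ((j : ℕ) + 1) * m.1 j) = i ∧
        (∀ j : Fin k, (j : ℕ) + 1 = σ → m.1 j = 0) then
      (Nat.multinomial Finset.univ m.1 : ℂ)
    else 0

/-- The vector `z_{λ^σ}[1] ∧ ⋯ ∧ z_{λ^σ}[k] ∈ ⋀^k(Sym^{≤k}ℂ^k)`. -/
noncomputable def zLamVec (k σ : ℕ) : Vk k := wedge (fun i => zLamPart k σ ((i : ℕ) + 1))

/-- The vector `z_{μ^σ}[1] ∧ ⋯ ∧ z_{μ^σ}[k] ∈ ⋀^k(Sym^{≤k}ℂ^k)`. -/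
noncomputable def zMuVec (k σ : ℕ) : Vk k := wedge (fun i => zMuPart k σ ((i : ℕ) + 1))

/-- `w` represents the limit point `z_ν = lim_{t→0} ν(t)·[p_k]` in `ℙ(⋀^k(Sym^{≤k}ℂ^k))`:
for a suitable normalising exponent `e`, the rescaled vectors `t^{-e}·ν(t)·p_k`
converge to `w` as `t → 0⁺`. -/
noncomputable def IsProjLimit {k : ℕ} (ν : Fin k → ℝ) (w : Vk k) : Prop :=
  ∃ e : ℝ, Filter.Tendsto (fun t : ℝ => ((t ^ (-e) : ℝ) : ℂ) • nuAct ν t (pkVec k))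
    (nhdsWithin 0 (Set.Ioi 0)) (nhds w)

/-! Order the monomials of `φ(1)e_i` by their `ν`-weight. Up to the factor `t^{∑ f_i}`, the vector
`ν(t)·p_k` is the wedge of the vectors obtained from `φ(1)e_i` by multiplying each monomial `m` by
`t^{ν(m) - f_i}`. If `f_i` is the least `ν`-weight occurring in `φ(1)e_i`, these converge to the
part of `φ(1)e_i` of `ν`-weight `f_i`. That wedge of lowest parts does not vanish, because different
columns involve different monomials. For `λ^σ` the minimum is attained at `e_i`, since
`⌊a/σ⌋ + ⌊b/σ⌋ ≤ ⌊(a+b)/σ⌋`; for `μ^σ` it is attained at `e_1^i`. -/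

section Wedge

variable {n k : ℕ}

lemma wedge_eq_det (v : Fin k → Mon n k → ℂ) (mf : Fin k → Mon n k) :
    wedge v mf = (Matrix.of fun i j => v i (mf j)).det := by
  simp only [wedge, Matrix.det_apply', Matrix.of_apply]

lemma continuous_wedge : Continuous (wedge : (Fin k → Mon n k → ℂ) → (Fin k → Mon n k) → ℂ) := by
  refine continuous_pi fun mf => ?_
  simp only [wedge_eq_det]
  exact Continuous.matrix_det (by fun_prop)

lemma wedge_smul (c : Fin k → ℂ) (v : Fin k → Mon n k → ℂ) :
    wedge (fun i => c i • v i) = (∏ i, c i) • wedge v := by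
  ext mf
  simpa only [Pi.smul_apply, wedge_eq_det] using!
    Matrix.det_mul_column c (Matrix.of fun i j => v i (mf j))

lemma wedge_mul_left_apply (c : Mon n k → ℂ) (v : Fin k → Mon n k → ℂ) (mf : Fin k → Mon n k) :
    wedge (fun i => c * v i) mf = (∏ j, c (mf j)) * wedge v mf := by
  simpa only [wedge_eq_det] using!
    Matrix.det_mul_row (fun j => c (mf j)) (Matrix.of fun i j => v i (mf j))

lemma wedge_ne_zero {v : Fin k → Mon n k → ℂ} (hv : ∀ i, v i ≠ 0)
    (hdisj : Pairwise fun i j => Disjoint (Function.support (v i)) (Function.support (v j))) :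
    wedge v ≠ 0 := by
  choose mf hmf using fun i => Function.ne_iff.mp (hv i)
  have hdiag : (Matrix.of fun i j => v i (mf j)) = Matrix.diagonal fun i => v i (mf i) := by
    ext i j
    rcases eq_or_ne i j with rfl | hij
    · simp
    · rw [Matrix.diagonal_apply_ne _ hij]
      exact Function.notMem_support.mp (Set.disjoint_right.mp (hdisj hij) (hmf j))
  refine Function.ne_iff.mpr ⟨mf, ?_⟩
  rw [wedge_eq_det, hdiag, Matrix.det_diagonal]
  exact Finset.prod_ne_zero_iff.mpr fun i _ => hmf i

end Wedge

namespace Mon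

variable {n k : ℕ}

/-- The exponent vector of a monomial, as a finitely supported function. -/
noncomputable def toFinsupp (m : Mon n k) : Fin n →₀ ℕ := Finsupp.equivFunOnFinite.symm m.1

/-- The degree of a monomial when `e_i` has degree `i` (index `1`-based): `e_{i₁}⋯e_{i_s}` has jet
degree `i₁+⋯+i_s`. -/
noncomputable def jetDegree (m : Mon n k) : ℕ :=
  Finsupp.weight (fun j : Fin n => (j : ℕ) + 1) m.toFinsupp

/-- The degree of a monomial when `e_i` has degree `⌊i/σ⌋` (index `1`-based): `e_{i₁}⋯e_{i_s}` has
floor degree `⌊i₁/σ⌋+⋯+⌊i_s/σ⌋`. -/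
noncomputable def floorDegree (σ : ℕ) (m : Mon n k) : ℕ :=
  Finsupp.weight (fun j : Fin n => ((j : ℕ) + 1) / σ) m.toFinsupp

/-- The exponent of `e_σ` (index `1`-based) in a monomial, which is `0` when there is no `e_σ`. -/
def exponent (σ : ℕ) (m : Mon n k) : ℕ := ∑ j : Fin n, if (j : ℕ) + 1 = σ then m.1 j else 0

/-- The monomial `e_i^d`. -/
def power (i : Fin n) (d : ℕ) (hd : 0 < d) (hdk : d ≤ k) : Mon n k :=
  ⟨Pi.single i d, by simpa using ⟨hd, hdk⟩⟩

lemma weight_toFinsupp {R : Type*} [CommSemiring R] (w : Fin n → R) (m : Mon n k) :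
    Finsupp.weight w m.toFinsupp = ∑ j, w j * (m.1 j : R) := by
  simp [Finsupp.weight_eq_sum, toFinsupp, mul_comm]

lemma jetDegree_eq_sum (m : Mon n k) : m.jetDegree = ∑ j : Fin n, ((j : ℕ) + 1) * m.1 j :=
  weight_toFinsupp _ m

lemma floorDegree_eq_sum (σ : ℕ) (m : Mon n k) :
    m.floorDegree σ = ∑ j : Fin n, (((j : ℕ) + 1) / σ) * m.1 j :=
  weight_toFinsupp _ m

lemma floorDegree_le {σ : ℕ} (hσ : 0 < σ) (m : Mon n k) : m.floorDegree σ ≤ m.jetDegree / σ := by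
  rw [Nat.le_div_iff_mul_le hσ, floorDegree_eq_sum, jetDegree_eq_sum, Finset.sum_mul]
  refine Finset.sum_le_sum fun j _ => ?_
  rw [mul_right_comm]
  exact Nat.mul_le_mul_right _ (Nat.div_mul_le_self _ _)

lemma exponent_eq_zero_iff {σ : ℕ} {m : Mon n k} :
    m.exponent σ = 0 ↔ ∀ j : Fin n, (j : ℕ) + 1 = σ → m.1 j = 0 := by
  simp [exponent]

lemma weight_power {M : Type*} [AddCommMonoid M] (w : Fin n → M) (i : Fin n) {d : ℕ} (hd : 0 < d)
    (hdk : d ≤ k) : Finsupp.weight w (power i d hd hdk).toFinsupp = d • w i := by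
  rw [toFinsupp, power, Finsupp.equivFunOnFinite_symm_single, Finsupp.weight_single]

lemma jetDegree_power (i : Fin n) {d : ℕ} (hd : 0 < d) (hdk : d ≤ k) :
    (power i d hd hdk).jetDegree = d * ((i : ℕ) + 1) :=
  weight_power _ i hd hdk

lemma weight_lamS (ε : ℝ) (σ : ℕ) (m : Mon n k) :
    Finsupp.weight (lamS n ε σ) m.toFinsupp = m.jetDegree - m.floorDegree σ * ε := by
  rw [weight_toFinsupp, jetDegree_eq_sum, floorDegree_eq_sum]
  push_cast
  rw [Finset.sum_mul, ← Finset.sum_sub_distrib]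
  refine Finset.sum_congr rfl fun j _ => ?_
  rw [lamS, lamW]
  push_cast
  ring

lemma weight_muS (ε : ℝ) (σ : ℕ) (m : Mon n k) :
    Finsupp.weight (muS n ε σ) m.toFinsupp = m.jetDegree + ε * m.exponent σ := by
  rw [weight_toFinsupp, jetDegree_eq_sum, exponent]
  push_cast
  rw [Finset.mul_sum, ← Finset.sum_add_distrib]
  refine Finset.sum_congr rfl fun j _ => ?_
  rw [muS]
  split_ifs with hj
  · rw [← hj]
    push_cast
    ring
  · simp

end Mon

section Column

open MvPolynomial

variable {k : ℕ}

lemma weightedHomogeneousComponent_prod_X {ι κ R M : Type*} [Fintype ι] [CommSemiring R]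
    [AddCommMonoid M] [DecidableEq M] (w : κ → M) (d : M) (a : ι → κ) :
    weightedHomogeneousComponent w d (∏ t, (X (a t) : MvPolynomial κ R)) =
      if ∑ t, w (a t) = d then ∏ t, X (a t) else 0 := by
  simp only [@eq_comm _ _ d]
  exact weightedHomogeneousComponent_of_mem
    (IsWeightedHomogeneous.prod _ _ _ fun t _ => isWeightedHomogeneous_X R w (a t))

lemma colPoly_one (i : Fin k) :
    colPoly (1 : Matrix (Fin k) (Fin k) ℂ) i =
      weightedHomogeneousComponent (fun j : Fin k => (j : ℕ) + 1) ((i : ℕ) + 1)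
        (∑ l : Fin k, (∑ j, X j) ^ ((l : ℕ) + 1)) := by
  have hcolumn (a : Fin k) :
      ∑ j, (1 : Matrix (Fin k) (Fin k) ℂ) j a • (X j : MvPolynomial (Fin k) ℂ) = X a := by
    simp [Matrix.one_apply]
  simp only [colPoly, hcolumn, Fintype.sum_pow, map_sum, weightedHomogeneousComponent_prod_X]

lemma coeff_sum_sum_X_pow {n : ℕ} (m : Mon n k) :
    coeff m.toFinsupp (∑ l : Fin k, (∑ j, X j : MvPolynomial (Fin n) ℂ) ^ ((l : ℕ) + 1)) =
      Nat.multinomial Finset.univ m.1 := by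
  obtain ⟨hpos, hle⟩ := m.2
  have hmult : m.toFinsupp.multinomial = Nat.multinomial Finset.univ m.1 :=
    Finsupp.multinomial_eq_of_support_subset (Finset.subset_univ _)
  have hlen (l : Fin k) : (m.toFinsupp.sum fun _ r => r) = (l : ℕ) + 1 ↔
      l = ⟨∑ j, m.1 j - 1, by omega⟩ := by
    rw [Finsupp.sum_fintype _ _ fun _ => rfl, Fin.ext_iff]
    change ∑ j, m.1 j = (l : ℕ) + 1 ↔ (l : ℕ) = ∑ j, m.1 j - 1
    omega
  simp [coeff_sum, coeff_sum_X_pow_of_fintype, hlen, hmult]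

lemma phiMat_one (m : Mon k k) (i : Fin k) :
    phiMat (1 : Matrix (Fin k) (Fin k) ℂ) m i =
      if m.jetDegree = (i : ℕ) + 1 then (Nat.multinomial Finset.univ m.1 : ℂ) else 0 := by
  rw [phiMat, colPoly_one, coeff_weightedHomogeneousComponent, ← coeff_sum_sum_X_pow,
    Mon.jetDegree, Mon.toFinsupp]

lemma phiMat_one_ne_zero_iff {m : Mon k k} {i : Fin k} :
    phiMat (1 : Matrix (Fin k) (Fin k) ℂ) m i ≠ 0 ↔ m.jetDegree = (i : ℕ) + 1 := by
  simp [phiMat_one, (Nat.multinomial_pos Finset.univ m.1).ne']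

end Column

section Limit

open Filter Topology

variable {n k : ℕ}

/-- The component of `ν`-weight `c` of an element of `Sym^{≤k}ℂ^n`. -/
noncomputable def weightPart (ν : Fin n → ℝ) (c : ℝ) (v : Mon n k → ℂ) : Mon n k → ℂ :=
  open Classical in fun m => if Finsupp.weight ν m.toFinsupp = c then v m else 0

lemma tendsto_rpow_nhdsGT_zero {s : ℝ} (hs : 0 ≤ s) :
    Tendsto (fun t : ℝ => t ^ s) (𝓝[>] 0) (𝓝 (if s = 0 then 1 else 0)) := by
  have hzero : (0 : ℝ) ^ s = if s = 0 then 1 else 0 := by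
    split_ifs with h
    · rw [h, Real.rpow_zero]
    · exact Real.zero_rpow h
  rw [← hzero]
  exact (Real.continuousAt_rpow_const 0 s (Or.inr hs)).tendsto.mono_left nhdsWithin_le_nhds

lemma tendsto_rpow_weight_sub_mul (ν : Fin n → ℝ) {c : ℝ} {v : Mon n k → ℂ}
    (hc : ∀ m, v m ≠ 0 → c ≤ Finsupp.weight ν m.toFinsupp) :
    Tendsto (fun (t : ℝ) m => ((t ^ (Finsupp.weight ν m.toFinsupp - c) : ℝ) : ℂ) * v m)
      (𝓝[>] 0) (𝓝 (weightPart ν c v)) := by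
  refine tendsto_pi_nhds.mpr fun m => ?_
  rcases eq_or_ne (v m) 0 with hm | hm
  · simp [weightPart, hm]
  · have hlim := tendsto_rpow_nhdsGT_zero (sub_nonneg.mpr (hc m hm))
    simpa [weightPart, sub_eq_zero, apply_ite] using hlim.ofReal.mul_const (v m)

lemma nuAct_wedge (ν : Fin k → ℝ) (t : ℝ) (v : Fin k → Mon k k → ℂ) :
    nuAct ν t (wedge v) =
      wedge fun i => (fun m => ((t ^ Finsupp.weight ν m.toFinsupp : ℝ) : ℂ)) * v i := by
  ext mf
  rw [wedge_mul_left_apply, nuAct, Complex.ofReal_prod]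
  simp only [Mon.weight_toFinsupp]

lemma rpow_smul_nuAct_wedge (ν f : Fin k → ℝ) {t : ℝ} (ht : 0 < t) (v : Fin k → Mon k k → ℂ) :
    ((t ^ (-∑ i, f i) : ℝ) : ℂ) • nuAct ν t (wedge v) =
      wedge fun i m => ((t ^ (Finsupp.weight ν m.toFinsupp - f i) : ℝ) : ℂ) * v i m := by
  rw [nuAct_wedge, ← Finset.sum_neg_distrib, Real.rpow_sum_of_pos ht, Complex.ofReal_prod,
    ← wedge_smul]
  congr! 3 with i m
  simp only [Pi.smul_apply, Pi.mul_apply, smul_eq_mul]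
  rw [← mul_assoc, ← Complex.ofReal_mul, ← Real.rpow_add ht, neg_add_eq_sub]

lemma tendsto_rpow_smul_nuAct_wedge (ν f : Fin k → ℝ) {v : Fin k → Mon k k → ℂ}
    (hf : ∀ i m, v i m ≠ 0 → f i ≤ Finsupp.weight ν m.toFinsupp) :
    Tendsto (fun t : ℝ => ((t ^ (-∑ i, f i) : ℝ) : ℂ) • nuAct ν t (wedge v)) (𝓝[>] 0)
      (𝓝 (wedge fun i => weightPart ν (f i) (v i))) := by
  have hparts := tendsto_pi_nhds.mpr fun i => tendsto_rpow_weight_sub_mul ν (hf i)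
  refine ((continuous_wedge.tendsto _).comp hparts).congr' ?_
  filter_upwards [self_mem_nhdsWithin] with t ht
  exact (rpow_smul_nuAct_wedge ν f ht v).symm

end Limit

section InitialPart

variable {k : ℕ}

/-- The `ν`-weights of the monomials of jet degree `i`, that is, of those occurring in the `i`-th
wedge factor of `p_k`. -/
def weightsOfJetDegree (ν : Fin k → ℝ) (i : ℕ) : Set ℝ :=
  (fun m : Mon k k => Finsupp.weight ν m.toFinsupp) '' {m | m.jetDegree = i}

/-- The component of `ν`-weight `c` of column `i` of `φ(1)`, the wedge factor of `p_k` of jet degree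
`i + 1`. When `c` is the least `ν`-weight occurring there, this is its initial form. -/
noncomputable def pkPart (ν : Fin k → ℝ) (c : ℝ) (i : Fin k) : Mon k k → ℂ :=
  weightPart ν c fun m => phiMat 1 m i

lemma pkPart_ne_zero_iff {ν : Fin k → ℝ} {c : ℝ} {i : Fin k} {m : Mon k k} :
    pkPart ν c i m ≠ 0 ↔ m.jetDegree = (i : ℕ) + 1 ∧ Finsupp.weight ν m.toFinsupp = c := by
  rw [pkPart, weightPart, ite_ne_right_iff, phiMat_one_ne_zero_iff, and_comm]

theorem wedge_pkPart_ne_zero {ν f : Fin k → ℝ}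
    (hf : ∀ i : Fin k, f i ∈ weightsOfJetDegree ν ((i : ℕ) + 1)) :
    wedge (fun i => pkPart ν (f i) i) ≠ 0 := by
  refine wedge_ne_zero (fun i => ?_) fun i j hij => Set.disjoint_left.mpr fun m hi hj => hij ?_
  · obtain ⟨m, hm⟩ := hf i
    exact Function.ne_iff.mpr ⟨m, pkPart_ne_zero_iff.mpr hm⟩
  · have hdeg := (pkPart_ne_zero_iff.mp hi).1.symm.trans (pkPart_ne_zero_iff.mp hj).1
    exact Fin.ext (Nat.succ_injective hdeg)

theorem isProjLimit_wedge_pkPart {ν f : Fin k → ℝ}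
    (hf : ∀ i : Fin k, f i ∈ lowerBounds (weightsOfJetDegree ν ((i : ℕ) + 1))) :
    IsProjLimit ν (wedge fun i => pkPart ν (f i) i) := by
  refine ⟨∑ i, f i, ?_⟩
  simp only [pkVec, wedgePhi, pkPart]
  exact tendsto_rpow_smul_nuAct_wedge ν f fun i m hm =>
    hf i ⟨m, phiMat_one_ne_zero_iff.mp hm, rfl⟩

theorem wedge_pkPart_ne_zero_and_isProjLimit {ν f : Fin k → ℝ}
    (hf : ∀ i : Fin k, IsLeast (weightsOfJetDegree ν ((i : ℕ) + 1)) (f i)) :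
    wedge (fun i => pkPart ν (f i) i) ≠ 0 ∧ IsProjLimit ν (wedge fun i => pkPart ν (f i) i) :=
  ⟨wedge_pkPart_ne_zero fun i => (hf i).1, isProjLimit_wedge_pkPart fun i => (hf i).2⟩

end InitialPart

section LimitPoints

variable {k σ : ℕ} {ε : ℝ}

lemma isLeast_weightsOfJetDegree_lamS (hε : 0 ≤ ε) (hσ : 0 < σ) (i : Fin k) :
    IsLeast (weightsOfJetDegree (lamS k ε σ) ((i : ℕ) + 1)) (lamW ε σ ((i : ℕ) + 1)) := by
  constructor
  · refine ⟨.power i 1 one_pos i.pos, ?_, ?_⟩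
    · simp [Mon.jetDegree_power]
    · simp [Mon.weight_power, lamS]
  · rintro _ ⟨m, hm, rfl⟩
    have hfloor := m.floorDegree_le hσ
    rw [hm] at hfloor
    simp only [Mon.weight_lamS, lamW]
    rw [hm]
    gcongr

lemma isLeast_weightsOfJetDegree_muS (hε : 0 ≤ ε) (hσ : σ ≠ 1) (i : Fin k) :
    IsLeast (weightsOfJetDegree (muS k ε σ) ((i : ℕ) + 1)) ((i : ℕ) + 1 : ℝ) := by
  constructor
  · refine ⟨.power ⟨0, i.pos⟩ ((i : ℕ) + 1) i.1.succ_pos i.2, ?_, ?_⟩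
    · simp [Mon.jetDegree_power]
    · simp [Mon.weight_power, muS, hσ.symm]
  · rintro _ ⟨m, hm, rfl⟩
    simp only [Mon.weight_muS]
    rw [hm, Nat.cast_succ]
    exact le_add_of_nonneg_right (by positivity)

lemma zLamPart_eq_pkPart (hε : ε ≠ 0) (i : Fin k) :
    zLamPart k σ ((i : ℕ) + 1) = pkPart (lamS k ε σ) (lamW ε σ ((i : ℕ) + 1)) i := by
  ext m
  rw [zLamPart, ← Mon.jetDegree_eq_sum, ← Mon.floorDegree_eq_sum, pkPart, weightPart, phiMat_one,
    ← ite_and]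
  refine if_congr (and_comm.trans (and_congr_left fun hm => ?_)) rfl rfl
  rw [Mon.weight_lamS, lamW, hm, sub_right_inj, mul_left_inj' hε, Nat.cast_inj]

lemma zMuPart_eq_pkPart (hε : ε ≠ 0) (i : Fin k) :
    zMuPart k σ ((i : ℕ) + 1) = pkPart (muS k ε σ) ((i : ℕ) + 1) i := by
  ext m
  rw [zMuPart, ← Mon.jetDegree_eq_sum, pkPart, weightPart, phiMat_one, ← ite_and]
  refine if_congr (and_comm.trans (and_congr_left fun hm => ?_)) rfl rfl
  rw [Mon.weight_muS, hm, Nat.cast_succ, add_eq_left, mul_eq_zero, or_iff_right hε,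
    Nat.cast_eq_zero, Mon.exponent_eq_zero_iff]

theorem zLamVec_ne_zero_and_isProjLimit (hε : 0 < ε) (hσ : 0 < σ) :
    zLamVec k σ ≠ 0 ∧ IsProjLimit (lamS k ε σ) (zLamVec k σ) := by
  simp only [zLamVec, zLamPart_eq_pkPart hε.ne']
  exact wedge_pkPart_ne_zero_and_isProjLimit (isLeast_weightsOfJetDegree_lamS hε.le hσ)

theorem zMuVec_ne_zero_and_isProjLimit (hε : 0 < ε) (hσ : σ ≠ 1) :
    zMuVec k σ ≠ 0 ∧ IsProjLimit (muS k ε σ) (zMuVec k σ) := by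
  simp only [zMuVec, zMuPart_eq_pkPart hε.ne']
  exact wedge_pkPart_ne_zero_and_isProjLimit (isLeast_weightsOfJetDegree_muS hε.le hσ)

end LimitPoints

theorem limit_points_explicit_general (k σ : ℕ) (ε : ℝ) (hε : 0 < ε) (hσ : 2 ≤ σ) :
    (zLamVec k σ ≠ 0 ∧ IsProjLimit (lamS k ε σ) (zLamVec k σ)) ∧
    (zMuVec k σ ≠ 0 ∧ IsProjLimit (muS k ε σ) (zMuVec k σ)) :=
  ⟨zLamVec_ne_zero_and_isProjLimit hε (by omega), zMuVec_ne_zero_and_isProjLimit hε (by omega)⟩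

/-- For `0 < ε < 1` and `2 ≤ σ ≤ k`, the limit point
`z_{λ^σ} = lim_{t→0} λ^σ(t)·[p_k]` equals `[z_{λ^σ}[1] ∧ ⋯ ∧ z_{λ^σ}[k]]`, and
`z_{μ^σ} = lim_{t→0} μ^σ(t)·[p_k]` equals `[z_{μ^σ}[1] ∧ ⋯ ∧ z_{μ^σ}[k]]`, with the
explicit factors described in `zLamPart` and `zMuPart`. -/
theorem limit_points_explicit (k σ : ℕ) (ε : ℝ) (hε0 : 0 < ε) (hε1 : ε < 1)
    (hσ2 : 2 ≤ σ) (hσk : σ ≤ k) :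
    (zLamVec k σ ≠ 0 ∧ IsProjLimit (lamS k ε σ) (zLamVec k σ)) ∧
    (zMuVec k σ ≠ 0 ∧ IsProjLimit (muS k ε σ) (zMuVec k σ)) :=
  limit_points_explicit_general k σ ε hε0 hσ2

end JetPaper
end

section
/- Fix 0 < ε < 1 small enough and 2 ≤ σ ≤ k. Under the substitution α_i = t^{n_i^σ} β_i (i = 1,…,k), every entry of the matrix G_{λ^σ(t)z}, namely t^{λ^σ_i − λ^σ_j} p_{i,j}(α) in position (i,j), becomes a polynomial in t with coefficients in ℂ[β_1,…,β_k]; in particular the entrywise limit lim_{t→0} G_{λ^σ(t)z}(β_1,…,β_k) exists. -/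
open scoped BigOperators

namespace JetPaper

/-- `n_i^σ = max_{1 ≤ j ≤ k−i+1} (λ^σ_{j+i−1} − λ^σ_j)`. -/
noncomputable def nmax (k : ℕ) (ε : ℝ) (σ i : ℕ) : ℝ :=
  Finset.sup' (Finset.Icc 1 (k - i + 1)) ⟨1, Finset.mem_Icc.mpr (by omega)⟩
    (fun j => lamW ε σ (j + i - 1) - lamW ε σ j)

/-- The matrix `G_{λ^σ(t)z}` after the substitution `α_i = t^{n_i^σ} β_i`: its `(i,j)`
entry is `t^{λ^σ_i − λ^σ_j} p_{i,j}(t^{n^σ}β)` (indices of `Fin k` represent `1,…,k`). -/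
noncomputable def Gent (k : ℕ) (ε : ℝ) (σ : ℕ) (t : ℝ) (β : Fin k → ℂ) :
    Matrix (Fin k) (Fin k) ℂ :=
  fun i j => ((t ^ (lamW ε σ ((i : ℕ) + 1) - lamW ε σ ((j : ℕ) + 1)) : ℝ) : ℂ) *
    repMat k (fun l => ((t ^ nmax k ε σ ((l : ℕ) + 1) : ℝ) : ℂ) * β l) i j

/-!
Expand the `(i,j)` entry over the tuples `(s_1, …, s_i)` with `s_1 + ⋯ + s_i = j`. The monomial
`β_{s_1} ⋯ β_{s_i}` carries the power of `t` with exponent `λ_i - λ_j + n_{s_1} + ⋯ + n_{s_i}`.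
Since `j = i + (s_1 - 1) + ⋯ + (s_i - 1)`, the weight index climbs from `i` to `j` by successive
steps of size `s_r - 1`, and each such step raises the weight by at most `n_{s_r}`. Telescoping
gives `λ_j - λ_i ≤ n_{s_1} + ⋯ + n_{s_i}`, so every exponent is nonnegative.
-/

section RealExponentPolynomial

variable {κ : Type*}

/-- Polynomials in `t`, with coefficients in `ℂ[β]`, whose exponents may be arbitrary nonnegative
reals. The expansion is only required for `t > 0`, where real powers of `t` are additive in the
exponent. -/
def IsRealExponentPolynomial (F : ℝ → (κ → ℂ) → ℂ) : Prop :=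
  ∃ s : Finset ℝ, (∀ c ∈ s, 0 ≤ c) ∧
    ∃ coef : ℝ → MvPolynomial κ ℂ,
      ∀ t : ℝ, 0 < t → ∀ β : κ → ℂ,
        F t β = ∑ c ∈ s, ((t ^ c : ℝ) : ℂ) * MvPolynomial.eval β (coef c)

theorem IsRealExponentPolynomial.of_eq_sum {ι : Type*} {F : ℝ → (κ → ℂ) → ℂ} (A : Finset ι)
    {e : ι → ℝ} (he : ∀ a ∈ A, 0 ≤ e a) (P : ι → MvPolynomial κ ℂ)
    (hF : ∀ t : ℝ, 0 < t → ∀ β,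
      F t β = ∑ a ∈ A, ((t ^ e a : ℝ) : ℂ) * MvPolynomial.eval β (P a)) :
    IsRealExponentPolynomial F := by
  classical
  refine ⟨A.image e, Finset.forall_mem_image.mpr he, fun c => ∑ a ∈ A with e a = c, P a,
    fun t ht β => ?_⟩
  rw [hF t ht β, ← Finset.sum_fiberwise_of_maps_to fun a => Finset.mem_image_of_mem e]
  refine Finset.sum_congr rfl fun c _ => ?_
  rw [map_sum, Finset.mul_sum]
  exact Finset.sum_congr rfl fun a ha => by rw [(Finset.mem_filter.mp ha).2]

theorem continuous_sum_ofReal_rpow_mul {s : Finset ℝ} (hs : ∀ c ∈ s, 0 ≤ c) (f : ℝ → ℂ) :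
    Continuous fun t : ℝ => ∑ c ∈ s, ((t ^ c : ℝ) : ℂ) * f c :=
  continuous_finsetSum s fun c hc =>
    (Complex.continuous_ofReal.comp (Real.continuous_rpow_const (hs c hc))).mul_const (f c)

theorem IsRealExponentPolynomial.exists_tendsto {F : ℝ → (κ → ℂ) → ℂ}
    (hF : IsRealExponentPolynomial F) (β : κ → ℂ) :
    ∃ L : ℂ, Filter.Tendsto (fun t => F t β) (nhdsWithin 0 (Set.Ioi 0)) (nhds L) := by
  obtain ⟨s, hs, coef, hexpand⟩ := hF
  have hcont := continuous_sum_ofReal_rpow_mul hs fun c => MvPolynomial.eval β (coef c)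
  refine ⟨_, ((hcont.tendsto 0).mono_left nhdsWithin_le_nhds).congr' ?_⟩
  filter_upwards [self_mem_nhdsWithin] with t ht
  exact (hexpand t ht β).symm

end RealExponentPolynomial

section Gaps

variable {k : ℕ} {w n : Fin k → ℝ}

/-- The number `n l` bounds every gap of the weights `w` over `l` steps. As `l : Fin k` stands for
the index `l + 1`, this is the inequality `λ_{j+i-1} - λ_j ≤ n_i` in 1-based notation. -/
def GapsBoundedBy (w n : Fin k → ℝ) : Prop :=
  ∀ ⦃p q l : Fin k⦄, (q : ℕ) = p + l → w q - w p ≤ n l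

theorem gapsBoundedBy_nmax (k : ℕ) (ε : ℝ) (σ : ℕ) :
    GapsBoundedBy (fun i : Fin k => lamW ε σ (i + 1)) (fun l => nmax k ε σ (l + 1)) := by
  intro p q l hq
  have hmem : (p : ℕ) + 1 ∈ Finset.Icc 1 (k - (l + 1) + 1) := Finset.mem_Icc.mpr (by omega)
  have hindex : (q : ℕ) + 1 = p + 1 + (l + 1) - 1 := by omega
  simp only [hindex]
  exact Finset.le_sup' (fun j => lamW ε σ (j + (l + 1) - 1) - lamW ε σ j) hmem

theorem GapsBoundedBy.sub_le_sum (h : GapsBoundedBy w n) {ι : Type*} (s : Finset ι)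
    (a : ι → Fin k) {p q : Fin k} (hq : (q : ℕ) = p + ∑ r ∈ s, (a r : ℕ)) :
    w q - w p ≤ ∑ r ∈ s, n (a r) := by
  classical
  induction s using Finset.induction_on generalizing q with
  | empty =>
    obtain rfl : q = p := Fin.ext (by simpa using hq)
    simp
  | insert r s hr ih =>
    rw [Finset.sum_insert hr] at hq ⊢
    let m : Fin k := ⟨p + ∑ r ∈ s, (a r : ℕ), by omega⟩
    have hlower : w m - w p ≤ ∑ r ∈ s, n (a r) := ih rfl
    have hstep : w q - w m ≤ n (a r) := h (by simp only [m]; omega)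
    linarith

end Gaps

section TwistedRepMat

variable {k : ℕ} {w n : Fin k → ℝ} {i j : Fin k}

/-- The `i`-tuples of positive integers with sum `j` that index the monomials of `p_{i,j}`;
as in `repMat`, elements of `Fin k` stand for the integers `1, …, k`. -/
def compositionTuples (i j : Fin k) : Finset (Fin (i.val + 1) → Fin k) :=
  {a | ∑ r, ((a r).val + 1) = j.val + 1}

/-- The matrix `(p_{i,j}(α))` with `α_l = t^{n_l} β_l`, conjugated by the diagonal one-parameter
group of weights `w`. The exponent `w_i - w_j` follows the sign convention of `Gent`, which is the
case `w = λ^σ`, `n = n^σ`. -/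
noncomputable def twistedRepMat (w n : Fin k → ℝ) (t : ℝ) (β : Fin k → ℂ) :
    Matrix (Fin k) (Fin k) ℂ :=
  fun i j => ((t ^ (w i - w j) : ℝ) : ℂ) * repMat k (fun l => ((t ^ n l : ℝ) : ℂ) * β l) i j

theorem twistedRepMat_apply_eq_sum (w n : Fin k → ℝ) {t : ℝ} (ht : 0 < t) (β : Fin k → ℂ)
    (i j : Fin k) :
    twistedRepMat w n t β i j =
      ∑ a ∈ compositionTuples i j,
        ((t ^ (w i - w j + ∑ r, n (a r)) : ℝ) : ℂ) * ∏ r, β (a r) := by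
  simp only [twistedRepMat, repMat]
  rw [← Finset.sum_filter, Finset.mul_sum]
  refine Finset.sum_congr rfl fun a _ => ?_
  rw [Finset.prod_mul_distrib, Real.rpow_add ht, Real.rpow_sum_of_pos ht, Complex.ofReal_mul,
    Complex.ofReal_prod, mul_assoc]

theorem GapsBoundedBy.exponent_nonneg (h : GapsBoundedBy w n)
    {a : Fin (i.val + 1) → Fin k} (ha : a ∈ compositionTuples i j) :
    0 ≤ w i - w j + ∑ r, n (a r) := by
  have hsum : ∑ r, ((a r).val + 1) = j.val + 1 := (Finset.mem_filter.mp ha).2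
  have hj : (j : ℕ) = i + ∑ r, (a r : ℕ) := by
    rw [Finset.sum_add_distrib, Fin.sum_const, smul_eq_mul, mul_one] at hsum
    omega
  linarith [h.sub_le_sum Finset.univ a hj]

theorem GapsBoundedBy.isRealExponentPolynomial_twistedRepMat (h : GapsBoundedBy w n)
    (i j : Fin k) : IsRealExponentPolynomial fun t β => twistedRepMat w n t β i j := by
  refine .of_eq_sum (compositionTuples i j) (fun a ha => h.exponent_nonneg ha)
    (fun a => ∏ r, MvPolynomial.X (a r)) fun t ht β => ?_
  simp only [twistedRepMat_apply_eq_sum w n ht, map_prod, MvPolynomial.eval_X]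

theorem substituted_stabiliser_polynomial_general (h : GapsBoundedBy w n) (i j : Fin k) :
    IsRealExponentPolynomial (fun t β => twistedRepMat w n t β i j) ∧
      ∀ β : Fin k → ℂ, ∃ L : ℂ, Filter.Tendsto (fun t : ℝ => twistedRepMat w n t β i j)
        (nhdsWithin 0 (Set.Ioi 0)) (nhds L) :=
  have hpoly := h.isRealExponentPolynomial_twistedRepMat i j
  ⟨hpoly, hpoly.exists_tendsto⟩

end TwistedRepMat

/-- For `ε` small enough and `2 ≤ σ ≤ k`: under the substitution
`α_i = t^{n_i^σ} β_i`, every entry of the matrix `G_{λ^σ(t)z}` becomes a polynomial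
expression in nonnegative powers of `t` with coefficients in `ℂ[β₁,…,β_k]`; in
particular the entrywise limit as `t → 0⁺` exists. -/
theorem substituted_stabiliser_polynomial (k : ℕ) (hk : 1 ≤ k) :
    ∃ ε₀ : ℝ, 0 < ε₀ ∧ ε₀ ≤ 1 ∧ ∀ ε : ℝ, 0 < ε → ε < ε₀ → ∀ σ : ℕ, 2 ≤ σ → σ ≤ k →
      ∀ i j : Fin k,
        (∃ s : Finset ℝ, (∀ c ∈ s, 0 ≤ c) ∧
          ∃ coef : ℝ → MvPolynomial (Fin k) ℂ,
            ∀ t : ℝ, 0 < t → ∀ β : Fin k → ℂ,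
              Gent k ε σ t β i j =
                ∑ c ∈ s, ((t ^ c : ℝ) : ℂ) * MvPolynomial.eval β (coef c)) ∧
        (∀ β : Fin k → ℂ, ∃ L : ℂ,
          Filter.Tendsto (fun t : ℝ => Gent k ε σ t β i j)
            (nhdsWithin 0 (Set.Ioi 0)) (nhds L)) :=
  ⟨1, one_pos, le_rfl, fun ε _ _ σ _ _ =>
    substituted_stabiliser_polynomial_general (gapsBoundedBy_nmax k ε σ)⟩

end JetPaper
end
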